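/- arXiv:math/0611058 — 2 statements merged into one kernel-verified Lean document; each statement's English description precedes it below -/
import Mathlib

section
/- Let n ≥ 2 and parametrize S^{n-1} by ω = (θ, φ) with θ ∈ [0, π] the polar angle (so S^{n-1}_+ corresponds to θ < π/2). For the function v(θ, φ) = cos²θ on S^{n-1}_+ (which together with its gradient vanishes on the equator θ = π/2), equality holds in the spectral inequality: ∫_{S^{n-1}_+} |δ_ω v|² dω = 2n ∫_{S^{n-1}_+} |∇_ω v|² dω. -/
open MeasureTheory Metric Set Filter
open scoped Topology RealInnerProductSpace NNReal ENNReal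

noncomputable section

/-- `ℝⁿ` with the Euclidean structure. -/
abbrev Euc (n : ℕ) := EuclideanSpace ℝ (Fin n)

/-- Pointwise Laplacian of `u : ℝⁿ → ℝ`. -/
def lap {n : ℕ} (u : Euc n → ℝ) (x : Euc n) : ℝ :=
  ∑ i : Fin n, fderiv ℝ (fun y => fderiv ℝ u y (EuclideanSpace.single i 1)) x
    (EuclideanSpace.single i 1)

/-- The last coordinate `x_n` of `x ∈ ℝⁿ`. -/
def lastCoord {n : ℕ} (x : Euc n) : ℝ := if h : 0 < n then x ⟨n - 1, by omega⟩ else 0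

/-- The open upper half-sphere `S^{n-1}_+ = S^{n-1} ∩ {x_n > 0}`. -/
def halfSphere (n : ℕ) : Set (Euc n) := {x | ‖x‖ = 1 ∧ 0 < lastCoord x}

/-- A function on the sphere `S^{n-1}`, represented by its `0`-homogeneous extension
to `ℝⁿ \ {0}`. -/
def IsHomog {n : ℕ} (v : Euc n → ℝ) : Prop :=
  ∀ x : Euc n, x ≠ 0 → ∀ c : ℝ, 0 < c → v (c • x) = v x

/-- A function in `C₀^∞(Γ)` for `Γ` relatively open in `S^{n-1}`: smooth on the sphere and
supported in a (relatively) compact subset of `Γ`; represented `0`-homogeneously. -/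
def IsSphTest {n : ℕ} (Γ : Set (Euc n)) (ψ : Euc n → ℝ) : Prop :=
  IsHomog ψ ∧ ContDiffOn ℝ (⊤ : ℕ∞) ψ {(0 : Euc n)}ᶜ ∧
    closure {ω | ‖ω‖ = 1 ∧ ψ ω ≠ 0} ⊆ Γ

/-- The surface measure `dω` on `S^{n-1} ⊆ ℝⁿ`: `(n-1)`-dimensional Hausdorff measure. -/
def sphMeasure (n : ℕ) : Measure (Euc n) := μH[(n : ℝ) - 1]

/-- `v ∈ ˚W₂¹(Γ)`: limit of `C₀^∞(Γ)` functions in the `W₂¹` norm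
(`v` is identified with its pointwise `0`-homogeneous representative). -/
def MemW21Sph0 {n : ℕ} (Γ : Set (Euc n)) (v : Euc n → ℝ) : Prop :=
  IsHomog v ∧ ∃ ψ : ℕ → Euc n → ℝ, (∀ k, IsSphTest Γ (ψ k)) ∧
    Tendsto (fun k => ∫ ω in Γ,
        ((ψ k ω - v ω) ^ 2 + ‖gradient (ψ k) ω - gradient v ω‖ ^ 2) ∂(sphMeasure n))
      atTop (𝓝 0)

/-- `v ∈ ˚W₂²(Γ)`: limit of `C₀^∞(Γ)` functions in the `W₂²` norm
(`v` is identified with its pointwise `0`-homogeneous representative). -/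
def MemW22Sph0 {n : ℕ} (Γ : Set (Euc n)) (v : Euc n → ℝ) : Prop :=
  IsHomog v ∧ ∃ ψ : ℕ → Euc n → ℝ, (∀ k, IsSphTest Γ (ψ k)) ∧
    Tendsto (fun k => ∫ ω in Γ,
        ((ψ k ω - v ω) ^ 2 + ‖gradient (ψ k) ω - gradient v ω‖ ^ 2
          + (lap (ψ k) ω - lap v ω) ^ 2) ∂(sphMeasure n))
      atTop (𝓝 0)

/-- `v ∈ W₂¹(Γ)` (no boundary condition): limit in `W₂¹(Γ)` of functions smooth on the
sphere. -/
def MemW21Sph {n : ℕ} (Γ : Set (Euc n)) (v : Euc n → ℝ) : Prop :=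
  IsHomog v ∧ ∃ ψ : ℕ → Euc n → ℝ,
    (∀ k, IsHomog (ψ k) ∧ ContDiffOn ℝ (⊤ : ℕ∞) (ψ k) {(0 : Euc n)}ᶜ) ∧
    Tendsto (fun k => ∫ ω in Γ,
        ((ψ k ω - v ω) ^ 2 + ‖gradient (ψ k) ω - gradient v ω‖ ^ 2) ∂(sphMeasure n))
      atTop (𝓝 0)

/-!
On the unit sphere, with `t = ⟪e, x⟫`, the function `v = cos² θ = (t / ‖x‖)²` satisfies
`δ v = 2 - 2 n t²` and `‖∇ v‖² = 4 t² - 4 t⁴`. Both are even, and the equator is a null set, so the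
integrals over the half-sphere are half of those over the sphere, where rotation invariance gives
the moments `n ∫ t² = ∫ 1` and `(n + 2) ∫ t⁴ = 3 ∫ t²`: polarizing `∫ ⟪u, x⟫⁴ = c ‖u‖⁴` yields
`3 ∫ ⟪u, x⟫² ⟪w, x⟫² = c (‖u‖² ‖w‖² + 2 ⟪u, w⟫²)`, and one sums over an orthonormal basis of `w`s.

Codimension-one Hausdorff measure is finite on the sphere and vanishes on the equator because the
inverse stereographic projection is Lipschitz on compact sets and carries a ball onto the
hemisphere opposite its pole, and the boundary of that ball onto the equator.
-/

open Module
open scoped Laplacian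

section Stereographic

variable {E : Type*} [NormedAddCommGroup E] [InnerProductSpace ℝ E] {v : E}

lemma inner_stereoInvFun (hv : ‖v‖ = 1) (w : (ℝ ∙ v)ᗮ) :
    ⟪v, (stereoInvFun hv w : E)⟫ = (‖w‖ ^ 2 - 4) / (‖w‖ ^ 2 + 4) := by
  have hvw : ⟪v, (w : E)⟫ = 0 := Submodule.mem_orthogonal_singleton_iff_inner_right.mp w.2
  simp only [stereoInvFun_apply, inner_smul_right, inner_add_right, hvw,
    real_inner_self_eq_norm_sq, hv]
  ring

lemma exists_stereoInvFun_eq (hv : ‖v‖ = 1) {x : E} (hx : ‖x‖ = 1) (hvx : ⟪v, x⟫ ≤ 0) :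
    ∃ w : (ℝ ∙ v)ᗮ, (stereoInvFun hv w : E) = x := by
  have hne : x ≠ v := by
    rintro rfl
    rw [real_inner_self_eq_norm_sq, hx] at hvx
    norm_num at hvx
  exact ⟨_, congrArg Subtype.val
    (stereo_left_inv hv (x := ⟨x, mem_sphere_zero_iff_norm.2 hx⟩) hne)⟩

lemma lowerHemisphere_subset_image_closedBall (hv : ‖v‖ = 1) :
    {x : E | ‖x‖ = 1 ∧ ⟪v, x⟫ ≤ 0} ⊆
      (fun w : (ℝ ∙ v)ᗮ => stereoInvFunAux v w) '' closedBall 0 2 := by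
  rintro x ⟨hx, hvx⟩
  obtain ⟨w, rfl⟩ := exists_stereoInvFun_eq hv hx hvx
  refine ⟨w, ?_, rfl⟩
  rw [inner_stereoInvFun, div_le_iff₀ (by positivity), zero_mul] at hvx
  rw [mem_closedBall_zero_iff]
  nlinarith [norm_nonneg w]

lemma equator_subset_image_sphere (hv : ‖v‖ = 1) :
    {x : E | ‖x‖ = 1 ∧ ⟪v, x⟫ = 0} ⊆
      (fun w : (ℝ ∙ v)ᗮ => stereoInvFunAux v w) '' sphere 0 2 := by
  rintro x ⟨hx, hvx⟩
  obtain ⟨w, rfl⟩ := exists_stereoInvFun_eq hv hx hvx.le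
  refine ⟨w, ?_, rfl⟩
  rw [inner_stereoInvFun, div_eq_iff (by positivity), zero_mul] at hvx
  rw [mem_sphere_zero_iff_norm]
  nlinarith [norm_nonneg w]

end Stereographic

section SurfaceMeasure

lemma exists_hausdorffMeasure_image_le {X Y : Type*} [MetricSpace X] [MetricSpace Y]
    [MeasurableSpace X] [BorelSpace X] [MeasurableSpace Y] [BorelSpace Y] {f : X → Y} {K : Set X}
    (hK : IsCompact K) (hf : LocallyLipschitzOn K f) {d : ℝ} (hd : 0 ≤ d) :
    ∃ C : ℝ≥0, μH[d] (f '' K) ≤ C * μH[d] K := by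
  obtain ⟨L, hL⟩ := hf.exists_lipschitzOnWith_of_compact hK
  refine ⟨L ^ d, ?_⟩
  rw [ENNReal.coe_rpow_of_nonneg _ hd]
  exact hL.hausdorffMeasure_image_le hd

variable {E : Type*} [NormedAddCommGroup E] [InnerProductSpace ℝ E] [FiniteDimensional ℝ E]
  [MeasurableSpace E] [BorelSpace E] {v : E}

lemma exists_hausdorffMeasure_stereoInvFunAux_image_le (hv : ‖v‖ = 1) {K : Set (ℝ ∙ v)ᗮ}
    (hK : IsCompact K) :
    ∃ C : ℝ≥0, μH[(finrank ℝ E : ℝ) - 1] ((fun w : (ℝ ∙ v)ᗮ => stereoInvFunAux v w) '' K) ≤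
      C * μH[finrank ℝ (ℝ ∙ v)ᗮ] K := by
  have hdim : (finrank ℝ E : ℝ) - 1 = finrank ℝ (ℝ ∙ v)ᗮ := by
    have hsum := (ℝ ∙ v).finrank_add_finrank_orthogonal
    rw [finrank_span_singleton (norm_ne_zero_iff.1 (hv ▸ one_ne_zero))] at hsum
    rw [← hsum]
    push_cast
    ring
  have hsmooth : ContDiff ℝ 1 fun w : (ℝ ∙ v)ᗮ => stereoInvFunAux v (w : E) :=
    contDiff_stereoInvFunAux.comp (ℝ ∙ v)ᗮ.subtypeL.contDiff
  rw [hdim]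
  exact exists_hausdorffMeasure_image_le hK hsmooth.locallyLipschitz.locallyLipschitzOn
    (Nat.cast_nonneg _)

variable (E) in
/-- Surface measure of the unit sphere, as a measure on the ambient space: Hausdorff measure of
codimension one restricted to the sphere. -/
def unitSphereMeasure : Measure E := μH[(finrank ℝ E : ℝ) - 1].restrict (sphere 0 1)

lemma hausdorffMeasure_lowerHemisphere_lt_top (hv : ‖v‖ = 1) :
    μH[(finrank ℝ E : ℝ) - 1] {x : E | ‖x‖ = 1 ∧ ⟪v, x⟫ ≤ 0} < ∞ := by
  obtain ⟨C, hC⟩ := exists_hausdorffMeasure_stereoInvFunAux_image_le hv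
    (isCompact_closedBall (0 : (ℝ ∙ v)ᗮ) 2)
  exact ((measure_mono (lowerHemisphere_subset_image_closedBall hv)).trans hC).trans_lt
    (ENNReal.mul_lt_top ENNReal.coe_lt_top (isCompact_closedBall _ _).measure_lt_top)

instance : IsFiniteMeasure (unitSphereMeasure E) := by
  rw [unitSphereMeasure, isFiniteMeasure_restrict, ← lt_top_iff_ne_top]
  obtain hempty | ⟨v, hv⟩ := (sphere (0 : E) 1).eq_empty_or_nonempty
  · simp [hempty]
  have hv : ‖v‖ = 1 := mem_sphere_zero_iff_norm.1 hv
  refine (measure_mono fun x hx => ?_).trans_lt (measure_union_lt_top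
    (hausdorffMeasure_lowerHemisphere_lt_top hv)
    (hausdorffMeasure_lowerHemisphere_lt_top (v := -v) ((norm_neg v).trans hv)))
  have hx : ‖x‖ = 1 := mem_sphere_zero_iff_norm.1 hx
  simpa [hx, inner_neg_left] using le_total ⟪v, x⟫ 0

lemma unitSphereMeasure_equator (hv : ‖v‖ = 1) :
    unitSphereMeasure E {x | ⟪v, x⟫ = 0} = 0 := by
  obtain ⟨C, hC⟩ := exists_hausdorffMeasure_stereoInvFunAux_image_le hv
    (isCompact_sphere (0 : (ℝ ∙ v)ᗮ) 2)
  rw [Measure.addHaar_sphere_of_ne_zero _ _ two_ne_zero, mul_zero] at hC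
  rw [unitSphereMeasure, Measure.restrict_apply' isClosed_sphere.measurableSet]
  refine measure_mono_null ?_ (nonpos_iff_eq_zero.1 hC)
  exact fun x hx => equator_subset_image_sphere hv ⟨mem_sphere_zero_iff_norm.1 hx.2, hx.1⟩

end SurfaceMeasure

section Moments

variable {E : Type*} [NormedAddCommGroup E] [InnerProductSpace ℝ E] [MeasurableSpace E]

/-- A uniform measure on the unit sphere, as a measure on the ambient space: it is concentrated on
the sphere and invariant under all linear isometries. No normalization is imposed. -/
structure IsUniformOnSphere (μ : Measure E) : Prop where
  ae_norm_eq_one : ∀ᵐ x ∂μ, ‖x‖ = 1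
  measurePreserving : ∀ R : E ≃ₗᵢ[ℝ] E, MeasurePreserving R μ μ

variable {μ : Measure E} {e : E}

lemma integral_eq_two_mul_setIntegral_inner_pos [BorelSpace E] [μ.IsNegInvariant]
    (hequator : μ {x | ⟪e, x⟫ = 0} = 0) {f : E → ℝ} (hf : Integrable f μ)
    (heven : ∀ x, f (-x) = f x) :
    ∫ x, f x ∂μ = 2 * ∫ x in {x | 0 < ⟪e, x⟫}, f x ∂μ := by
  have hpos : MeasurableSet {x : E | 0 < ⟪e, x⟫} :=
    (isOpen_lt continuous_const (by fun_prop)).measurableSet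
  have hcompl : ({x | 0 < ⟪e, x⟫}ᶜ : Set E) =ᵐ[μ] Neg.neg ⁻¹' {x | 0 < ⟪e, x⟫} := by
    rw [eventuallyEq_set]
    filter_upwards [measure_eq_zero_iff_ae_notMem.1 hequator] with x hx
    simpa [inner_neg_right] using Ne.le_iff_lt hx
  have hreflect := (Measure.measurePreserving_neg μ).setIntegral_preimage_emb
    (MeasurableEquiv.neg E).measurableEmbedding f {x | 0 < ⟪e, x⟫}
  simp only [heven] at hreflect
  rw [← integral_add_compl hpos hf, setIntegral_congr_set hcompl, hreflect, two_mul]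

namespace IsUniformOnSphere

lemma isNegInvariant (hμ : IsUniformOnSphere μ) : μ.IsNegInvariant :=
  ⟨(hμ.measurePreserving (LinearIsometryEquiv.neg ℝ)).map_eq⟩

variable [BorelSpace E]

lemma integral_comp_inner_eq {F : Type*} [NormedAddCommGroup F] [NormedSpace ℝ F]
    (hμ : IsUniformOnSphere μ) {u w : E} (h : ‖u‖ = ‖w‖) (f : ℝ → F) :
    ∫ x, f ⟪u, x⟫ ∂μ = ∫ x, f ⟪w, x⟫ ∂μ := by
  set R := (ℝ ∙ (u - w))ᗮ.reflection
  have hRu : R u = w := Submodule.reflection_sub h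
  rw [← (hμ.measurePreserving R).integral_comp
    R.toHomeomorph.measurableEmbedding (fun x => f ⟪w, x⟫)]
  simp only [← hRu, R.inner_map_map]

lemma integral_inner_pow (hμ : IsUniformOnSphere μ) (he : ‖e‖ = 1) (u : E) (k : ℕ) :
    ∫ x, ⟪u, x⟫ ^ k ∂μ = ‖u‖ ^ k * ∫ x, ⟪e, x⟫ ^ k ∂μ := by
  have hu : ‖u‖ = ‖‖u‖ • e‖ := by rw [norm_smul, he, norm_norm, mul_one]
  rw [hμ.integral_comp_inner_eq hu (· ^ k), ← integral_const_mul]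
  simp only [real_inner_smul_left, mul_pow]

variable [FiniteDimensional ℝ E] [IsFiniteMeasure μ]

lemma integrable (hμ : IsUniformOnSphere μ) {f : E → ℝ} (hf : Continuous f) :
    Integrable f μ := by
  obtain ⟨C, hC⟩ := (isCompact_sphere (0 : E) 1).exists_bound_of_continuousOn hf.continuousOn
  refine Integrable.of_bound hf.aestronglyMeasurable C ?_
  filter_upwards [hμ.ae_norm_eq_one] with x hx
  exact hC x (mem_sphere_zero_iff_norm.2 hx)

lemma integral_inner_sq_mul_inner_sq (hμ : IsUniformOnSphere μ) (he : ‖e‖ = 1) (u w : E) :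
    3 * ∫ x, ⟪u, x⟫ ^ 2 * ⟪w, x⟫ ^ 2 ∂μ =
      (‖u‖ ^ 2 * ‖w‖ ^ 2 + 2 * ⟪u, w⟫ ^ 2) * ∫ x, ⟪e, x⟫ ^ 4 ∂μ := by
  have hpolar : ∀ x : E, ⟪u, x⟫ ^ 2 * ⟪w, x⟫ ^ 2 =
      1 / 12 * (⟪u + w, x⟫ ^ 4 + ⟪u - w, x⟫ ^ 4 - 2 * ⟪u, x⟫ ^ 4 - 2 * ⟪w, x⟫ ^ 4) := by
    intro x
    rw [inner_add_left, inner_sub_left]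
    ring
  have hadd : ‖u + w‖ ^ 4 = (‖u‖ ^ 2 + 2 * ⟪u, w⟫ + ‖w‖ ^ 2) ^ 2 := by
    rw [← norm_add_sq_real]; ring
  have hsub : ‖u - w‖ ^ 4 = (‖u‖ ^ 2 - 2 * ⟪u, w⟫ + ‖w‖ ^ 2) ^ 2 := by
    rw [← norm_sub_sq_real]; ring
  simp only [hpolar]
  rw [integral_const_mul, integral_sub (hμ.integrable (by fun_prop)) (hμ.integrable (by fun_prop)),
    integral_sub (hμ.integrable (by fun_prop)) (hμ.integrable (by fun_prop)),
    integral_add (hμ.integrable (by fun_prop)) (hμ.integrable (by fun_prop)),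
    integral_const_mul, integral_const_mul]
  rw [hμ.integral_inner_pow he (u + w), hμ.integral_inner_pow he (u - w),
    hμ.integral_inner_pow he u, hμ.integral_inner_pow he w, hadd, hsub]
  ring

lemma integral_eq_sum_integral_mul_inner_sq {ι : Type*} [Fintype ι] (b : OrthonormalBasis ι ℝ E)
    (hμ : IsUniformOnSphere μ) {f : E → ℝ} (hf : Continuous f) :
    ∫ x, f x ∂μ = ∑ i, ∫ x, f x * ⟪b i, x⟫ ^ 2 ∂μ := by
  rw [← integral_finsetSum _ fun i _ => hμ.integrable (by fun_prop)]
  refine integral_congr_ae ?_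
  filter_upwards [hμ.ae_norm_eq_one] with x hx
  rw [← Finset.mul_sum, b.sum_sq_inner_right, hx, one_pow, mul_one]

lemma finrank_mul_integral_inner_sq (hμ : IsUniformOnSphere μ) (he : ‖e‖ = 1) :
    (finrank ℝ E : ℝ) * ∫ x, ⟪e, x⟫ ^ 2 ∂μ = μ.real univ := by
  set b := stdOrthonormalBasis ℝ E
  have hsum := hμ.integral_eq_sum_integral_mul_inner_sq b (continuous_const (y := (1 : ℝ)))
  simp only [one_mul, fun i => hμ.integral_inner_pow he (b i) 2, b.norm_eq_one] at hsum
  simpa using hsum.symm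

lemma finrank_add_two_mul_integral_inner_pow_four (hμ : IsUniformOnSphere μ) (he : ‖e‖ = 1) :
    ((finrank ℝ E : ℝ) + 2) * ∫ x, ⟪e, x⟫ ^ 4 ∂μ = 3 * ∫ x, ⟪e, x⟫ ^ 2 ∂μ := by
  set b := stdOrthonormalBasis ℝ E
  rw [hμ.integral_eq_sum_integral_mul_inner_sq b (f := fun x => ⟪e, x⟫ ^ 2) (by fun_prop),
    Finset.mul_sum]
  simp only [hμ.integral_inner_sq_mul_inner_sq he, ← Finset.sum_mul, Finset.sum_add_distrib,
    ← Finset.mul_sum, b.sum_sq_inner_left, he, b.norm_eq_one]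
  simp

lemma integral_sq_two_sub_eq (hμ : IsUniformOnSphere μ) (he : ‖e‖ = 1) :
    ∫ x, (2 - 2 * (finrank ℝ E : ℝ) * ⟪e, x⟫ ^ 2) ^ 2 ∂μ =
      2 * (finrank ℝ E : ℝ) * ∫ x, (4 * ⟪e, x⟫ ^ 2 - 4 * ⟪e, x⟫ ^ 4) ∂μ := by
  have hexpand : ∀ x : E, (2 - 2 * (finrank ℝ E : ℝ) * ⟪e, x⟫ ^ 2) ^ 2 =
      4 - 8 * (finrank ℝ E : ℝ) * ⟪e, x⟫ ^ 2 + 4 * (finrank ℝ E : ℝ) ^ 2 * ⟪e, x⟫ ^ 4 :=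
    fun x => by ring
  simp only [hexpand]
  rw [integral_add (hμ.integrable (by fun_prop)) (hμ.integrable (by fun_prop)),
    integral_sub (hμ.integrable (by fun_prop)) (hμ.integrable (by fun_prop)),
    integral_sub (hμ.integrable (by fun_prop)) (hμ.integrable (by fun_prop))]
  simp only [integral_const_mul, integral_const, smul_eq_mul]
  linear_combination -4 * hμ.finrank_mul_integral_inner_sq he +
    4 * (finrank ℝ E : ℝ) * hμ.finrank_add_two_mul_integral_inner_pow_four he

end IsUniformOnSphere

lemma isUniformOnSphere_unitSphereMeasure [BorelSpace E] :
    IsUniformOnSphere (unitSphereMeasure E) where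
  ae_norm_eq_one := by
    filter_upwards [ae_restrict_mem isClosed_sphere.measurableSet] with x hx
    exact mem_sphere_zero_iff_norm.1 hx
  measurePreserving R := by
    have hpre : R ⁻¹' sphere 0 1 = sphere 0 1 := by ext; simp
    have h := (R.toIsometryEquiv.measurePreserving_hausdorffMeasure
      ((finrank ℝ E : ℝ) - 1)).restrict_preimage (isClosed_sphere (x := (0 : E))
        (ε := 1)).measurableSet
    rwa [LinearIsometryEquiv.coe_toIsometryEquiv, hpre] at h

end Moments

section Calculus

variable {E : Type*} [NormedAddCommGroup E] [InnerProductSpace ℝ E]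

/-- The function `cos² θ` on the unit sphere, `θ` being the angle to the unit vector `e`, extended
to `E \ {0}` as a `0`-homogeneous function. -/
def cosSq (e x : E) : ℝ := (⟪e, x⟫ / ‖x‖) ^ 2

variable {e x : E}

lemma contDiffAt_cosSq {n : WithTop ℕ∞} (hx : x ≠ 0) : ContDiffAt ℝ n (cosSq e) x :=
  ((contDiffAt_const.inner ℝ contDiffAt_id).div (contDiffAt_norm ℝ hx)
    (norm_ne_zero_iff.2 hx)).pow 2

lemma hasFDerivAt_inner_div_norm_sq (u : E) (hx : x ≠ 0) :
    HasFDerivAt (fun y => ⟪u, y⟫ / ‖y‖ ^ 2)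
      ((‖x‖ ^ 2)⁻¹ • innerSL ℝ (u - (2 * ⟪u, x⟫ / ‖x‖ ^ 2) • x)) x := by
  have hnorm : ‖x‖ ^ 2 ≠ 0 := pow_ne_zero 2 (norm_ne_zero_iff.2 hx)
  have hinv := (hasDerivAt_inv hnorm).comp_hasFDerivAt x (hasStrictFDerivAt_norm_sq x).hasFDerivAt
  refine ((innerSL ℝ u).hasFDerivAt.mul hinv).congr_fderiv ?_
  ext h
  simp only [coe_innerSL_apply, neg_smul, smul_neg, Function.comp_apply, add_apply, neg_apply,
    smul_apply, nsmul_eq_mul, Nat.cast_ofNat, smul_eq_mul, map_sub, map_smul, sub_apply]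
  field_simp
  ring

lemma hasFDerivAt_cosSq (hx : x ≠ 0) :
    HasFDerivAt (cosSq e)
      (innerSL ℝ ((2 * ⟪e, x⟫ / ‖x‖ ^ 2) • e - (2 * (⟪e, x⟫ / ‖x‖ ^ 2) ^ 2) • x)) x := by
  have heq : cosSq e = fun y => ⟪e, y⟫ * (⟪e, y⟫ / ‖y‖ ^ 2) := by
    ext y
    rw [cosSq]
    ring
  rw [heq]
  refine ((innerSL ℝ e).hasFDerivAt.mul (hasFDerivAt_inner_div_norm_sq e hx)).congr_fderiv ?_
  ext h
  simp only [coe_innerSL_apply, map_sub, map_smul, add_apply, smul_apply, sub_apply,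
    smul_eq_mul]
  field_simp
  ring

lemma hasGradientAt_cosSq [CompleteSpace E] (hx : x ≠ 0) :
    HasGradientAt (cosSq e)
      ((2 * ⟪e, x⟫ / ‖x‖ ^ 2) • e - (2 * (⟪e, x⟫ / ‖x‖ ^ 2) ^ 2) • x) x :=
  hasGradientAt_iff_hasFDerivAt.2 (hasFDerivAt_cosSq hx)

lemma norm_gradient_cosSq_sq [CompleteSpace E] (he : ‖e‖ = 1) (hx : ‖x‖ = 1) :
    ‖gradient (cosSq e) x‖ ^ 2 = 4 * ⟪e, x⟫ ^ 2 - 4 * ⟪e, x⟫ ^ 4 := by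
  have hx0 : x ≠ 0 := norm_ne_zero_iff.1 (hx ▸ one_ne_zero)
  rw [(hasGradientAt_cosSq hx0).gradient, norm_sub_sq_real, norm_smul, norm_smul,
    real_inner_smul_left, real_inner_smul_right, mul_pow, mul_pow, Real.norm_eq_abs,
    Real.norm_eq_abs, sq_abs, sq_abs, he, hx]
  ring

lemma fderiv_fderiv_apply {F G : Type*} [NormedAddCommGroup F] [NormedSpace ℝ F]
    [NormedAddCommGroup G] [NormedSpace ℝ G] {f : F → G} {x : F} (hf : ContDiffAt ℝ 2 f x)
    (h k : F) :
    fderiv ℝ (fun y => fderiv ℝ f y h) x k = iteratedFDeriv ℝ 2 f x ![k, h] := by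
  have hdiff : DifferentiableAt ℝ (fderiv ℝ f) x :=
    (hf.fderiv_right (m := 1) le_rfl).differentiableAt one_ne_zero
  rw [iteratedFDeriv_two_apply, fderiv_clm_apply hdiff (differentiableAt_const h)]
  simp

lemma lap_eq_laplacian {n : ℕ} {u : Euc n → ℝ} {x : Euc n} (hu : ContDiffAt ℝ 2 u x) :
    lap u x = Δ u x := by
  rw [lap, InnerProductSpace.laplacian_eq_iteratedFDeriv_orthonormalBasis u
    (EuclideanSpace.basisFun (Fin n) ℝ)]
  simp only [fderiv_fderiv_apply hu, EuclideanSpace.basisFun_apply]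

lemma iteratedFDeriv_two_cosSq (hx : ‖x‖ = 1) (h : E) :
    iteratedFDeriv ℝ 2 (cosSq e) x ![h, h] =
      2 * ⟪e, h⟫ ^ 2 - 8 * ⟪e, x⟫ * (⟪e, h⟫ * ⟪h, x⟫)
        - 2 * ⟪e, x⟫ ^ 2 * ‖h‖ ^ 2 + 8 * ⟪e, x⟫ ^ 2 * ⟪h, x⟫ ^ 2 := by
  have hx0 : x ≠ 0 := norm_ne_zero_iff.1 (hx ▸ one_ne_zero)
  have hfst : (fun y => fderiv ℝ (cosSq e) y h) =ᶠ[𝓝 x]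
      fun y => 2 * ⟪e, h⟫ * (⟪e, y⟫ / ‖y‖ ^ 2) - 2 * ((⟪e, y⟫ / ‖y‖ ^ 2) ^ 2 * ⟪h, y⟫) := by
    filter_upwards [isOpen_ne.mem_nhds hx0] with y hy
    rw [(hasFDerivAt_cosSq hy).fderiv, innerSL_apply_apply,
      inner_sub_left, real_inner_smul_left, real_inner_smul_left, real_inner_comm y h]
    ring
  have hquot := hasFDerivAt_inner_div_norm_sq e hx0
  have hsnd := (hquot.const_mul (2 * ⟪e, h⟫)).sub
    (((hquot.pow 2).mul (innerSL ℝ h).hasFDerivAt).const_mul 2)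
  rw [← fderiv_fderiv_apply (contDiffAt_cosSq hx0), hfst.fderiv_eq]
  refine (congrArg (· h) hsnd.fderiv).trans ?_
  simp only [hx, one_pow, inv_one, div_one, map_sub, map_smul, one_smul, coe_innerSL_apply,
    real_inner_comm x h, Nat.add_one_sub_one, pow_one, nsmul_eq_mul, Nat.cast_ofNat, smul_add,
    sub_apply, smul_apply, smul_eq_mul, add_apply, inner_self_eq_norm_sq_to_K, Real.ringHom_apply]
  ring

lemma laplacian_cosSq [FiniteDimensional ℝ E] (he : ‖e‖ = 1) (hx : ‖x‖ = 1) :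
    Δ (cosSq e) x = 2 - 2 * (finrank ℝ E : ℝ) * ⟪e, x⟫ ^ 2 := by
  set b := stdOrthonormalBasis ℝ E
  rw [InnerProductSpace.laplacian_eq_iteratedFDeriv_orthonormalBasis _ b]
  simp only [iteratedFDeriv_two_cosSq hx, Finset.sum_add_distrib, Finset.sum_sub_distrib,
    ← Finset.mul_sum, b.sum_inner_mul_inner, b.sum_sq_inner_left, b.sum_sq_inner_right,
    b.norm_eq_one, he, hx]
  simp only [one_pow, mul_one, Finset.sum_const, Finset.card_univ, Fintype.card_fin, nsmul_eq_mul]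
  ring

end Calculus

theorem halfSphere_spectral_equality_cos_sq_general {E : Type*} [NormedAddCommGroup E]
    [InnerProductSpace ℝ E] [FiniteDimensional ℝ E] [MeasurableSpace E] [BorelSpace E]
    {e : E} (he : ‖e‖ = 1) :
    ∫ ω in {x | 0 < ⟪e, x⟫}, (Δ (cosSq e) ω) ^ 2 ∂(unitSphereMeasure E) =
      2 * (finrank ℝ E : ℝ) *
        ∫ ω in {x | 0 < ⟪e, x⟫}, ‖gradient (cosSq e) ω‖ ^ 2 ∂(unitSphereMeasure E) := by
  have hμ : IsUniformOnSphere (unitSphereMeasure E) := isUniformOnSphere_unitSphereMeasure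
  have := hμ.isNegInvariant
  have hsphere := ae_restrict_of_ae (s := {x | 0 < ⟪e, x⟫}) hμ.ae_norm_eq_one
  have hlap := integral_congr_ae (hsphere.mono fun x hx =>
    congrArg (· ^ 2) (laplacian_cosSq he hx))
  have hgrad := integral_congr_ae (hsphere.mono fun x hx => norm_gradient_cosSq_sq he hx)
  have hfull := hμ.integral_sq_two_sub_eq he
  have hhalf {f : E → ℝ} (hf : Continuous f) (heven : ∀ x, f (-x) = f x) :=
    integral_eq_two_mul_setIntegral_inner_pos (unitSphereMeasure_equator he) (hμ.integrable hf)
      heven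
  rw [hhalf (by fun_prop) (by simp [inner_neg_right]),
    hhalf (by fun_prop) (by simp [inner_neg_right, Even.neg_pow (by decide : Even 4)])] at hfull
  rw [hlap, hgrad]
  linarith

section NorthPole

variable {n : ℕ}

/-- The north pole of `S^{n-1} ⊆ ℝⁿ`, i.e. the last vector of the standard basis. -/
def northPole (hn : 0 < n) : Euc n := EuclideanSpace.single ⟨n - 1, by omega⟩ 1

lemma norm_northPole (hn : 0 < n) : ‖northPole hn‖ = 1 := by
  simp [northPole]

lemma lastCoord_eq_inner_northPole (hn : 0 < n) (x : Euc n) : lastCoord x = ⟪northPole hn, x⟫ := by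
  simp [lastCoord, northPole, hn, EuclideanSpace.inner_single_left]

lemma cosSq_northPole (hn : 0 < n) :
    cosSq (northPole hn) = fun x => (lastCoord x / ‖x‖) ^ 2 := by
  simp only [lastCoord_eq_inner_northPole hn]
  rfl

lemma sphMeasure_restrict_halfSphere (hn : 0 < n) :
    (sphMeasure n).restrict (halfSphere n) =
      (unitSphereMeasure (Euc n)).restrict {x | 0 < ⟪northPole hn, x⟫} := by
  have hpos : MeasurableSet {x : Euc n | 0 < ⟪northPole hn, x⟫} :=
    (isOpen_lt continuous_const (by fun_prop)).measurableSet
  rw [unitSphereMeasure, Measure.restrict_restrict hpos, finrank_euclideanSpace_fin, sphMeasure]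
  congr 1
  ext x
  simp [halfSphere, lastCoord_eq_inner_northPole hn, and_comm]

lemma lap_cosSq_ae_eq (e : Euc n) :
    lap (cosSq e) =ᵐ[unitSphereMeasure (Euc n)] Δ (cosSq e) := by
  filter_upwards [isUniformOnSphere_unitSphereMeasure.ae_norm_eq_one] with x hx
  exact lap_eq_laplacian (contDiffAt_cosSq (norm_ne_zero_iff.1 (hx ▸ one_ne_zero)))

end NorthPole

/-- Equality in the spectral inequality of Lemma 3.2.2 for `v = cos²θ`, i.e. for the
`0`-homogeneous function `x ↦ (x_n/|x|)²`:
`∫_{S^{n-1}_+} |δ_ω v|² dω = 2n ∫_{S^{n-1}_+} |∇_ω v|² dω`. -/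
theorem halfSphere_spectral_equality_cos_sq (n : ℕ) (hn : 2 ≤ n) :
    ∫ ω in halfSphere n, (lap (fun x : Euc n => (lastCoord x / ‖x‖) ^ 2) ω) ^ 2
        ∂(sphMeasure n) =
      2 * (n : ℝ) *
        ∫ ω in halfSphere n, ‖gradient (fun x : Euc n => (lastCoord x / ‖x‖) ^ 2) ω‖ ^ 2
          ∂(sphMeasure n) := by
  have hpos : 0 < n := by omega
  have hlap : (fun ω => lap (cosSq (northPole hpos)) ω ^ 2) =ᵐ[unitSphereMeasure (Euc n)]
      fun ω => Δ (cosSq (northPole hpos)) ω ^ 2 := (lap_cosSq_ae_eq _).pow_const 2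
  rw [← cosSq_northPole hpos, sphMeasure_restrict_halfSphere hpos,
    integral_congr_ae (ae_restrict_of_ae hlap)]
  simpa only [finrank_euclideanSpace_fin] using
    halfSphere_spectral_equality_cos_sq_general (norm_northPole hpos)
end
end

section
/- Let n ≥ 2 and let g be the function defined below. Then for every t ∈ ℝ \ {0}, (n²/2 − 1) g'''(t) + (n³ + 2n) g''(t) + (n⁴/2 + 4n² + 2) g'(t) ≤ 0; explicitly, this expression equals −(1/(2√(n²+8))) · n(n√(n²+8) + 6) e^{−(1/2)(n−√(n²+8))t} for t < 0, and −(1/(2√(n²+8))) · [ (2 + n²)√(n²+8) e^{−nt} + n(6 − n√(n²+8)) e^{−(1/2)(n+√(n²+8))t} ] for t > 0, and both expressions are nonpositive. -/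
open MeasureTheory Metric Set Filter
open scoped Topology RealInnerProductSpace NNReal ENNReal

noncomputable section

/-- The fundamental solution `g` from Lemma 3.2 of the paper:
`g(t) = −(1/(2n√(n²+8)))·(n e^{−(1/2)(n−√(n²+8))t} − √(n²+8))` for `t < 0` and
`g(t) = −(1/(2n√(n²+8)))·(n e^{−(1/2)(n+√(n²+8))t} − √(n²+8) e^{−nt})` for `t ≥ 0`. -/
def gfun (n : ℕ) (t : ℝ) : ℝ :=
  if t < 0 then
    -(1 / (2 * (n : ℝ) * Real.sqrt ((n : ℝ) ^ 2 + 8))) *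
      ((n : ℝ) * Real.exp (-(1 / 2) * ((n : ℝ) - Real.sqrt ((n : ℝ) ^ 2 + 8)) * t)
        - Real.sqrt ((n : ℝ) ^ 2 + 8))
  else
    -(1 / (2 * (n : ℝ) * Real.sqrt ((n : ℝ) ^ 2 + 8))) *
      ((n : ℝ) * Real.exp (-(1 / 2) * ((n : ℝ) + Real.sqrt ((n : ℝ) ^ 2 + 8)) * t)
        - Real.sqrt ((n : ℝ) ^ 2 + 8) * Real.exp (-(n : ℝ) * t))

/-!
On each side of the origin `g` is a combination of exponentials `e^{λt}`, so a constant-coefficient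
operator multiplies each of them by the value `p(λ)` of its symbol. The exponents involving
`√(n²+8)` are the two roots of `λ² + nλ - 2`, and modulo this quadratic the cubic symbol reduces to
`p(λ) = n (n (2λ + n) + 6)`, where `2λ + n = ±√(n²+8)`. The only
negative contribution to the bracket for `t > 0`, namely `-n² √(n²+8) e^{λt}`, is absorbed by the
`e^{-nt}` term because `λ ≤ -n`.
-/

section ExponentialSums

variable {f : ℝ → ℝ} {A B a b t : ℝ}

theorem iteratedDeriv_eq_of_eventuallyEq_exp_add_exp
    (hf : f =ᶠ[𝓝 t] fun x => A * Real.exp (a * x) + B * Real.exp (b * x)) (k : ℕ) :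
    iteratedDeriv k f t = A * (a ^ k * Real.exp (a * t)) + B * (b ^ k * Real.exp (b * t)) := by
  rw [hf.iteratedDeriv_eq, iteratedDeriv_fun_add (by fun_prop) (by fun_prop)]
  simp only [iteratedDeriv_const_mul_field, iteratedDeriv_exp_const_mul]

/-- The operator `(ν²/2 - 1) D³ + (ν³ + 2ν) D² + (ν⁴/2 + 4ν² + 2) D` of formula (4.12.2), with the
dimension replaced by a real parameter `ν`. -/
def thirdOrderOp (ν : ℝ) (f : ℝ → ℝ) (t : ℝ) : ℝ :=
  (ν ^ 2 / 2 - 1) * iteratedDeriv 3 f t + (ν ^ 3 + 2 * ν) * iteratedDeriv 2 f t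
    + (ν ^ 4 / 2 + 4 * ν ^ 2 + 2) * deriv f t

/-- The symbol of `thirdOrderOp ν`: its eigenvalue on the exponential `t ↦ exp (x * t)`. -/
def thirdOrderSymbol (ν x : ℝ) : ℝ :=
  (ν ^ 2 / 2 - 1) * x ^ 3 + (ν ^ 3 + 2 * ν) * x ^ 2 + (ν ^ 4 / 2 + 4 * ν ^ 2 + 2) * x

theorem thirdOrderOp_eq_of_eventuallyEq_exp_add_exp (ν : ℝ)
    (hf : f =ᶠ[𝓝 t] fun x => A * Real.exp (a * x) + B * Real.exp (b * x)) :
    thirdOrderOp ν f t = A * (thirdOrderSymbol ν a * Real.exp (a * t))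
      + B * (thirdOrderSymbol ν b * Real.exp (b * t)) := by
  rw [thirdOrderOp, ← iteratedDeriv_one]
  simp only [iteratedDeriv_eq_of_eventuallyEq_exp_add_exp hf, thirdOrderSymbol]
  ring

end ExponentialSums

theorem thirdOrderSymbol_zero (ν : ℝ) : thirdOrderSymbol ν 0 = 0 := by
  simp [thirdOrderSymbol]

theorem thirdOrderSymbol_neg_self (ν : ℝ) : thirdOrderSymbol ν (-ν) = -(ν * (2 + ν ^ 2)) := by
  rw [thirdOrderSymbol]
  ring

theorem thirdOrderSymbol_of_sq_add_mul_eq_two {ν x : ℝ} (hx : x ^ 2 + ν * x = 2) :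
    thirdOrderSymbol ν x = ν * (ν * (2 * x + ν) + 6) := by
  rw [thirdOrderSymbol]
  linear_combination ((ν ^ 2 / 2 - 1) * (x - ν) + ν ^ 3 + 2 * ν) * hx

theorem thirdOrderSymbol_half_sub {ν s : ℝ} (hs : s ^ 2 = ν ^ 2 + 8) :
    thirdOrderSymbol ν (-(1 / 2) * (ν - s)) = ν * (ν * s + 6) := by
  rw [thirdOrderSymbol_of_sq_add_mul_eq_two (by linear_combination hs / 4)]
  ring

theorem thirdOrderSymbol_half_add {ν s : ℝ} (hs : s ^ 2 = ν ^ 2 + 8) :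
    thirdOrderSymbol ν (-(1 / 2) * (ν + s)) = ν * (6 - ν * s) := by
  rw [thirdOrderSymbol_of_sq_add_mul_eq_two (by linear_combination hs / 4)]
  ring

/-- The function `gfun` with the dimension replaced by a real parameter `ν`; for natural `n`,
`gfun n` and `gfunReal n` agree definitionally. -/
def gfunReal (ν t : ℝ) : ℝ :=
  if t < 0 then
    -(1 / (2 * ν * √(ν ^ 2 + 8))) *
      (ν * Real.exp (-(1 / 2) * (ν - √(ν ^ 2 + 8)) * t) - √(ν ^ 2 + 8))
  else
    -(1 / (2 * ν * √(ν ^ 2 + 8))) *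
      (ν * Real.exp (-(1 / 2) * (ν + √(ν ^ 2 + 8)) * t)
        - √(ν ^ 2 + 8) * Real.exp (-ν * t))

section GfunReal

variable {ν t : ℝ}

-- The constant term is written as `exp (0 * t)`, so that both half-lines have the same shape.
theorem gfunReal_of_neg (hν : ν ≠ 0) (ht : t < 0) :
    gfunReal ν t = -(1 / (2 * √(ν ^ 2 + 8))) * Real.exp (-(1 / 2) * (ν - √(ν ^ 2 + 8)) * t)
      + 1 / (2 * ν) * Real.exp (0 * t) := by
  have hs : √(ν ^ 2 + 8) ≠ 0 := by positivity
  rw [gfunReal, if_pos ht, zero_mul, Real.exp_zero]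
  field_simp
  ring

theorem gfunReal_of_pos (hν : ν ≠ 0) (ht : 0 < t) :
    gfunReal ν t = -(1 / (2 * √(ν ^ 2 + 8))) * Real.exp (-(1 / 2) * (ν + √(ν ^ 2 + 8)) * t)
      + 1 / (2 * ν) * Real.exp (-ν * t) := by
  have hs : √(ν ^ 2 + 8) ≠ 0 := by positivity
  rw [gfunReal, if_neg ht.not_gt]
  field_simp
  ring

theorem thirdOrderOp_gfunReal_of_neg (hν : ν ≠ 0) (ht : t < 0) :
    thirdOrderOp ν (gfunReal ν) t =
      -(1 / (2 * √(ν ^ 2 + 8))) *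
        (ν * (ν * √(ν ^ 2 + 8) + 6) * Real.exp (-(1 / 2) * (ν - √(ν ^ 2 + 8)) * t)) := by
  have hs : √(ν ^ 2 + 8) ^ 2 = ν ^ 2 + 8 := Real.sq_sqrt (by positivity)
  rw [thirdOrderOp_eq_of_eventuallyEq_exp_add_exp ν
      ((eventually_lt_nhds ht).mono fun _ hx => gfunReal_of_neg hν hx),
    thirdOrderSymbol_half_sub hs, thirdOrderSymbol_zero, zero_mul, mul_zero, add_zero]

theorem thirdOrderOp_gfunReal_of_pos (hν : ν ≠ 0) (ht : 0 < t) :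
    thirdOrderOp ν (gfunReal ν) t =
      -(1 / (2 * √(ν ^ 2 + 8))) *
        ((2 + ν ^ 2) * √(ν ^ 2 + 8) * Real.exp (-ν * t)
          + ν * (6 - ν * √(ν ^ 2 + 8)) * Real.exp (-(1 / 2) * (ν + √(ν ^ 2 + 8)) * t)) := by
  have hs : √(ν ^ 2 + 8) ^ 2 = ν ^ 2 + 8 := Real.sq_sqrt (by positivity)
  have hs₀ : √(ν ^ 2 + 8) ≠ 0 := by positivity
  rw [thirdOrderOp_eq_of_eventuallyEq_exp_add_exp ν
      ((eventually_gt_nhds ht).mono fun _ hx => gfunReal_of_pos hν hx),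
    thirdOrderSymbol_half_add hs, thirdOrderSymbol_neg_self]
  field_simp
  ring

theorem thirdOrderOp_gfunReal_nonpos_of_neg (hν : 0 < ν) (ht : t < 0) :
    thirdOrderOp ν (gfunReal ν) t ≤ 0 := by
  rw [thirdOrderOp_gfunReal_of_neg hν.ne' ht, neg_mul, neg_nonpos]
  positivity

theorem thirdOrderOp_gfunReal_nonpos_of_pos (hν : 0 < ν) (ht : 0 < t) :
    thirdOrderOp ν (gfunReal ν) t ≤ 0 := by
  rw [thirdOrderOp_gfunReal_of_pos hν.ne' ht, neg_mul, neg_nonpos]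
  have hνs : ν ≤ √(ν ^ 2 + 8) := Real.le_sqrt_of_sq_le (by linarith)
  set s := √(ν ^ 2 + 8)
  have hexp : Real.exp (-(1 / 2) * (ν + s) * t) ≤ Real.exp (-ν * t) := by
    gcongr
    linarith
  have hbracket : 0 ≤ (2 + ν ^ 2) * s * Real.exp (-ν * t)
      + ν * (6 - ν * s) * Real.exp (-(1 / 2) * (ν + s) * t) :=
    calc
      0 ≤ (2 * s + 6 * ν) * Real.exp (-(1 / 2) * (ν + s) * t) := by positivity
      _ = (2 + ν ^ 2) * s * Real.exp (-(1 / 2) * (ν + s) * t)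
          + ν * (6 - ν * s) * Real.exp (-(1 / 2) * (ν + s) * t) := by ring
      _ ≤ (2 + ν ^ 2) * s * Real.exp (-ν * t)
          + ν * (6 - ν * s) * Real.exp (-(1 / 2) * (ν + s) * t) := by gcongr
  positivity

theorem gfun_third_order_combination_general (hν : 0 < ν) (ht : t ≠ 0) :
    thirdOrderOp ν (gfunReal ν) t ≤ 0 ∧
      (t < 0 → thirdOrderOp ν (gfunReal ν) t =
        -(1 / (2 * √(ν ^ 2 + 8))) *
          (ν * (ν * √(ν ^ 2 + 8) + 6) * Real.exp (-(1 / 2) * (ν - √(ν ^ 2 + 8)) * t))) ∧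
      (0 < t → thirdOrderOp ν (gfunReal ν) t =
        -(1 / (2 * √(ν ^ 2 + 8))) *
          ((2 + ν ^ 2) * √(ν ^ 2 + 8) * Real.exp (-ν * t)
            + ν * (6 - ν * √(ν ^ 2 + 8)) * Real.exp (-(1 / 2) * (ν + √(ν ^ 2 + 8)) * t))) :=
  ⟨ht.lt_or_gt.elim (thirdOrderOp_gfunReal_nonpos_of_neg hν)
      (thirdOrderOp_gfunReal_nonpos_of_pos hν),
    thirdOrderOp_gfunReal_of_neg hν.ne', thirdOrderOp_gfunReal_of_pos hν.ne'⟩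

end GfunReal

/-- Formula (4.12.2): the combination
`(n²/2 − 1) g''' + (n³ + 2n) g'' + (n⁴/2 + 4n² + 2) g'` is nonpositive away from the
origin, with the explicit expressions for `t < 0` and `t > 0`. -/
theorem gfun_third_order_combination (n : ℕ) (hn : 2 ≤ n) :
    ∀ t : ℝ, t ≠ 0 →
      (((n : ℝ) ^ 2 / 2 - 1) * iteratedDeriv 3 (gfun n) t
          + ((n : ℝ) ^ 3 + 2 * (n : ℝ)) * iteratedDeriv 2 (gfun n) t
          + ((n : ℝ) ^ 4 / 2 + 4 * (n : ℝ) ^ 2 + 2) * deriv (gfun n) t ≤ 0) ∧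
      (t < 0 →
        ((n : ℝ) ^ 2 / 2 - 1) * iteratedDeriv 3 (gfun n) t
            + ((n : ℝ) ^ 3 + 2 * (n : ℝ)) * iteratedDeriv 2 (gfun n) t
            + ((n : ℝ) ^ 4 / 2 + 4 * (n : ℝ) ^ 2 + 2) * deriv (gfun n) t =
          -(1 / (2 * Real.sqrt ((n : ℝ) ^ 2 + 8))) *
            ((n : ℝ) * ((n : ℝ) * Real.sqrt ((n : ℝ) ^ 2 + 8) + 6) *
              Real.exp (-(1 / 2) * ((n : ℝ) - Real.sqrt ((n : ℝ) ^ 2 + 8)) * t))) ∧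
      (0 < t →
        ((n : ℝ) ^ 2 / 2 - 1) * iteratedDeriv 3 (gfun n) t
            + ((n : ℝ) ^ 3 + 2 * (n : ℝ)) * iteratedDeriv 2 (gfun n) t
            + ((n : ℝ) ^ 4 / 2 + 4 * (n : ℝ) ^ 2 + 2) * deriv (gfun n) t =
          -(1 / (2 * Real.sqrt ((n : ℝ) ^ 2 + 8))) *
            ((2 + (n : ℝ) ^ 2) * Real.sqrt ((n : ℝ) ^ 2 + 8) * Real.exp (-(n : ℝ) * t)
              + (n : ℝ) * (6 - (n : ℝ) * Real.sqrt ((n : ℝ) ^ 2 + 8)) *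
                Real.exp (-(1 / 2) * ((n : ℝ) + Real.sqrt ((n : ℝ) ^ 2 + 8)) * t))) :=
  fun _ ht => gfun_third_order_combination_general (Nat.cast_pos.mpr (by lia)) ht
end
end
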